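/- Suppose 1/3 < α ≤ 1. Let T ⊆ V, let k ∈ ℕ with k' := k − |T| ≥ 1, let t be a real number, and set t' := t − val(T). Suppose every vertex w ∈ V∖T satisfies contribution(w, T) < t'/k' + (3α−1)·(k−1), and let v ∈ V∖T be a vertex satisfying contribution(v, T) < t'/k' − (3α−1)·(k−1)². Then there is no set S with T ⊆ S ⊆ V, |S| = k, v ∈ S and val(S) ≥ t. -/

import Mathlib

open Finset

variable {V : Type*} [Fintype V] [DecidableEq V]

/-- Number of edges of `G` with both endpoints in `S`. -/
def mIn (G : SimpleGraph V) [DecidableRel G.Adj] (S : Finset V) : ℕ :=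
  (G.edgeFinset.filter (fun e => ∀ v ∈ e, v ∈ S)).card

/-- Number of edges of `G` with exactly one endpoint in `S`. -/
def mCut (G : SimpleGraph V) [DecidableRel G.Adj] (S : Finset V) : ℕ :=
  (G.edgeFinset.filter (fun e => (∃ v ∈ e, v ∈ S) ∧ ∃ v ∈ e, v ∉ S)).card

/-- `val(S) = α·(m(S, V∖S) + counter(S)) + (1−α)·m(S)`. -/
noncomputable def val (G : SimpleGraph V) [DecidableRel G.Adj] (counter : V → ℕ) (α : ℝ)
    (S : Finset V) : ℝ :=
  α * ((mCut G S : ℝ) + ∑ v ∈ S, (counter v : ℝ)) + (1 - α) * (mIn G S : ℝ)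

/-- `degc(v) = deg(v) + counter(v)`. -/
def degc (G : SimpleGraph V) [DecidableRel G.Adj] (counter : V → ℕ) (v : V) : ℕ :=
  G.degree v + counter v

/-- `contribution(v, T) = α·degc(v) + (1−3α)·|N(v) ∩ T|`. -/
noncomputable def contribution (G : SimpleGraph V) [DecidableRel G.Adj] (counter : V → ℕ)
    (α : ℝ) (v : V) (T : Finset V) : ℝ :=
  α * (degc G counter v : ℝ) + (1 - 3 * α) * ((G.neighborFinset v ∩ T).card : ℝ)

theorem mCut_add (G : SimpleGraph V) [DecidableRel G.Adj] (S : Finset V) :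
    mCut G S + 2 * mIn G S = ∑ v ∈ S, G.degree v := by
  have h1 : ∀ v, G.degree v = ∑ e ∈ G.edgeFinset, if v ∈ e then 1 else 0 := by
    intro v
    rw [← G.card_incidenceFinset_eq_degree, G.incidenceFinset_eq_filter, Finset.card_filter]
  simp_rw [h1]
  rw [Finset.sum_comm, mCut, mIn, Finset.card_filter, Finset.card_filter, Finset.mul_sum,
    ← Finset.sum_add_distrib]
  refine Finset.sum_congr rfl ?_
  intro e he
  induction e using Sym2.ind with
  | _ x y =>
    have hxy : x ≠ y := by
      have : G.Adj x y := by simpa using he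
      exact this.ne
    have h2 : ∀ v, (if v ∈ s(x, y) then 1 else 0)
        = (if v = x then 1 else 0) + (if v = y then 1 else 0 : ℕ) := by
      intro v
      simp only [Sym2.mem_iff]
      by_cases a : v = x <;> by_cases b : v = y <;> simp_all
    simp_rw [h2]
    rw [Finset.sum_add_distrib, Finset.sum_ite_eq', Finset.sum_ite_eq']
    by_cases a : x ∈ S <;> by_cases b : y ∈ S <;> simp [a, b]

theorem mIn_insert (G : SimpleGraph V) [DecidableRel G.Adj] (A : Finset V) (w : V) (hw : w ∉ A) :
    mIn G (insert w A) = mIn G A + (G.neighborFinset w ∩ A).card := by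
  have hinj : Set.InjOn (fun u => s(w, u)) ((G.neighborFinset w ∩ A : Finset V) : Set V) := by
    intro a _ b _ h
    exact Sym2.congr_right.mp h
  rw [mIn, mIn, ← Finset.card_image_of_injOn hinj, ← Finset.card_union_of_disjoint]
  · congr 1
    ext e
    induction e using Sym2.ind with
    | _ x y =>
      simp only [Finset.mem_filter, Finset.mem_union, Finset.mem_image, Finset.mem_inter,
        SimpleGraph.mem_neighborFinset, SimpleGraph.mem_edgeFinset, SimpleGraph.mem_edgeSet,
        Sym2.mem_iff, forall_eq_or_imp, forall_eq, Finset.mem_insert]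
      constructor
      · rintro ⟨h, rfl | hx, rfl | hy⟩
        · exact absurd h (G.loopless.irrefl _)
        · exact Or.inr ⟨y, ⟨h, hy⟩, rfl⟩
        · exact Or.inr ⟨x, ⟨h.symm, hx⟩, Sym2.eq_swap⟩
        · exact Or.inl ⟨h, hx, hy⟩
      · rintro (⟨h, hx, hy⟩ | ⟨u, ⟨h, hu⟩, he⟩)
        · exact ⟨h, Or.inr hx, Or.inr hy⟩
        · rcases Sym2.eq_iff.mp he with ⟨rfl, rfl⟩ | ⟨rfl, rfl⟩
          · exact ⟨h, Or.inl rfl, Or.inr hu⟩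
          · exact ⟨h.symm, Or.inr hu, Or.inl rfl⟩
  · rw [Finset.disjoint_left]
    intro e he he'
    obtain ⟨u, _, rfl⟩ := Finset.mem_image.mp he'
    exact hw ((Finset.mem_filter.mp he).2 w (Sym2.mem_mk_left w u))

theorem val_eq (G : SimpleGraph V) [DecidableRel G.Adj] (counter : V → ℕ) (α : ℝ)
    (S : Finset V) : val G counter α S
      = α * ∑ v ∈ S, (degc G counter v : ℝ) + (1 - 3 * α) * (mIn G S : ℝ) := by
  have h : (mCut G S : ℝ) + 2 * mIn G S = ∑ v ∈ S, (G.degree v : ℝ) := by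
    exact_mod_cast mCut_add G S
  simp only [_root_.val, degc, Nat.cast_add, Finset.sum_add_distrib]
  rw [← h]
  ring

theorem val_union_le (G : SimpleGraph V) [DecidableRel G.Adj] (counter : V → ℕ) (α : ℝ)
    (hα : 1 / 3 < α) (T B : Finset V) (hB : Disjoint T B) :
    val G counter α (T ∪ B) ≤ val G counter α T + ∑ w ∈ B, contribution G counter α w T := by
  induction B using Finset.induction_on with
  | empty => simp
  | insert w B hwB ih =>
    rw [Finset.disjoint_insert_right] at hB
    have ih := ih hB.2
    have hw : w ∉ T ∪ B := by simp [hB.1, hwB]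
    have hc : ((G.neighborFinset w ∩ T).card : ℝ) ≤ (G.neighborFinset w ∩ (T ∪ B)).card := by
      exact_mod_cast Finset.card_le_card
        (Finset.inter_subset_inter_left Finset.subset_union_left)
    rw [Finset.union_insert, val_eq, Finset.sum_insert hw, mIn_insert G _ w hw,
      Finset.sum_insert hwB]
    rw [val_eq G counter α (T ∪ B)] at ih
    push_cast
    unfold contribution at ih ⊢
    nlinarith

/-- Exclusion of a needless vertex: for `1/3 < α ≤ 1`, if every vertex outside `T`
has contribution `< t'/k' + (3α−1)(k−1)` and `v ∉ T` has contribution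
`< t'/k' − (3α−1)(k−1)²`, then no solution contains `v`. -/
theorem needless_vertex_exclusion (G : SimpleGraph V) [DecidableRel G.Adj]
    (counter : V → ℕ) (α : ℝ) (hα1 : 1 / 3 < α) (hα2 : α ≤ 1)
    (T : Finset V) (k : ℕ) (t : ℝ) (hTk : T.card < k)
    (hall : ∀ w : V, w ∉ T →
      contribution G counter α w T <
        (t - val G counter α T) / ((k : ℝ) - T.card) + (3 * α - 1) * ((k : ℝ) - 1))
    (v : V) (hvT : v ∉ T)
    (hv : contribution G counter α v T <
      (t - val G counter α T) / ((k : ℝ) - T.card) - (3 * α - 1) * ((k : ℝ) - 1) ^ 2) :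
    ¬ ∃ S : Finset V, T ⊆ S ∧ S.card = k ∧ v ∈ S ∧ val G counter α S ≥ t := by
  rintro ⟨S, hTS, hSk, hvS, hval⟩
  have hu := val_union_le G counter α hα1 T (S \ T) Finset.disjoint_sdiff
  rw [Finset.union_sdiff_of_subset hTS] at hu
  have hvB : v ∈ S \ T := Finset.mem_sdiff.mpr ⟨hvS, hvT⟩
  have hcard : (((S \ T).erase v).card : ℝ) = (k : ℝ) - T.card - 1 := by
    have h1 := Finset.card_erase_add_one hvB
    have h2 := Finset.card_sdiff_add_card_eq_card hTS
    have h3 : ((S \ T).erase v).card + 1 + T.card = k := by omega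
    rw [← h3]
    push_cast
    ring
  rw [← Finset.add_sum_erase _ _ hvB] at hu
  have hs : ∑ w ∈ (S \ T).erase v, contribution G counter α w T ≤
      ((S \ T).erase v).card • ((t - val G counter α T) / ((k : ℝ) - T.card)
        + (3 * α - 1) * ((k : ℝ) - 1)) := by
    apply Finset.sum_le_card_nsmul
    intro w hw
    exact (hall w (Finset.mem_sdiff.mp (Finset.mem_of_mem_erase hw)).2).le
  rw [nsmul_eq_mul, hcard] at hs
  have hpos : (0 : ℝ) < (k : ℝ) - T.card := by
    have : (T.card : ℝ) < k := by exact_mod_cast hTk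
    linarith
  have hk1 : (0 : ℝ) ≤ (k : ℝ) - 1 := by
    have : (1 : ℝ) ≤ k := by exact_mod_cast (by omega : 1 ≤ k)
    linarith
  have hT0 : (0 : ℝ) ≤ T.card := Nat.cast_nonneg _
  have hq : (t - val G counter α T) / ((k : ℝ) - T.card) * ((k : ℝ) - T.card)
      = t - val G counter α T := div_mul_cancel₀ _ hpos.ne'
  have hn : 0 ≤ (3 * α - 1) * ((k : ℝ) - 1) * T.card :=
    mul_nonneg (mul_nonneg (by linarith) hk1) hT0
  nlinarith
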